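/- Let k be a nonnegative integer and let f = f₀ + M₂* f₁ with f₀ ∈ M_{4k}(Γ₀⁺(2),(−1)^k) and f₁ ∈ M_{4k-2}(Γ₀⁺(2),(−1)^k), where M₂*(z) = (2E₂(2z)+E₂(z))/3. Suppose f is extremal, i.e. v_∞(f) = k (which equals dim 𝑀̃_{4k}^{≤1}(Γ₀⁺(2),(−1)^k) − 1). Let P(z) = e^{πikz} ∏_{n≥1} (1−qⁿ)^{4k} (1−q^{2n})^{4k} (so that P = M₈^{k/2}, where M₈(z) = η(z)⁸η(2z)⁸; P is nonvanishing on ℍ). Then y := f/P satisfies the differential equation y″(z) = −4π² (k/2)² M₄(z) y(z) for all z ∈ ℍ, where M₄(z) = (4E₄(2z) + E₄(z))/5. -/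

import Mathlib

noncomputable section

open Complex Matrix Filter Topology

abbrev SL2R := Matrix.SpecialLinearGroup (Fin 2) ℝ
abbrev SL2Z := Matrix.SpecialLinearGroup (Fin 2) ℤ

/-- The upper half-plane, as a subset of `ℂ`. -/
def UHP : Set ℂ := {z : ℂ | 0 < z.im}

/-- The embedding of `SL(2,ℤ)` into `SL(2,ℝ)`. -/
def toR : SL2Z →* SL2R := Matrix.SpecialLinearGroup.map (Int.castRingHom ℝ)

/-- `SL(2,ℤ)` as a subgroup of `SL(2,ℝ)`. -/
def SL2ZR : Subgroup SL2R := Subgroup.map toR ⊤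

/-- Möbius action of a real matrix on a complex number. -/
def moeb (γ : SL2R) (z : ℂ) : ℂ :=
  ((γ.1 0 0 : ℂ) * z + (γ.1 0 1 : ℂ)) / ((γ.1 1 0 : ℂ) * z + (γ.1 1 1 : ℂ))

/-- The automorphy factor `cz + d`. -/
def jfac (γ : SL2R) (z : ℂ) : ℂ := (γ.1 1 0 : ℂ) * z + (γ.1 1 1 : ℂ)

/-- A holomorphic modular form of weight `k` and character `χ` on `Γ ≤ SL(2,ℝ)`
(for `Γ` commensurable with `SL(2,ℤ)`): holomorphic on `ℍ`, satisfying the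
transformation law, and holomorphic (bounded) at every cusp. -/
structure IsModularForm (Γ : Subgroup SL2R) (χ : SL2R → ℂ) (k : ℤ) (f : ℂ → ℂ) : Prop where
  holo : DifferentiableOn ℂ f UHP
  transform : ∀ γ ∈ Γ, ∀ z ∈ UHP, f (moeb γ z) = χ γ * jfac γ z ^ k * f z
  bdd_at_cusps : ∀ σ : SL2Z, ∃ C : ℝ, ∀ z ∈ UHP, 1 ≤ z.im →
    ‖jfac (toR σ) z ^ (-k) * f (moeb (toR σ) z)‖ ≤ C

/-- A finite-order character of `Γ`. -/
def IsCharacter (Γ : Subgroup SL2R) (χ : SL2R → ℂ) : Prop :=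
  (∀ γ ∈ Γ, ∀ δ ∈ Γ, χ (γ * δ) = χ γ * χ δ) ∧
    ∃ n : ℕ, 0 < n ∧ ∀ γ ∈ Γ, χ γ ^ n = 1

/-- `φ` is quasimodular of weight 2 and depth 1 on `Γ`, with constant `α`:
`(cz+d)⁻² φ(γz) = φ(z) + α c/(cz+d)`. -/
def IsQuasiWt2 (Γ : Subgroup SL2R) (α : ℂ) (φ : ℂ → ℂ) : Prop :=
  ∀ γ ∈ Γ, ∀ z ∈ UHP,
    (jfac γ z)⁻¹ ^ 2 * φ (moeb γ z) = φ z + α * (γ.1 1 0 : ℂ) / jfac γ z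

/-- `f` has vanishing order `ν` at the cusp `∞`, with respect to `q_N = e^{2πiz/N}`:
`q_N^{-ν}·f(z)` tends to a nonzero constant as `Im z → ∞`. -/
def VOrder (N : ℝ) (f : ℂ → ℂ) (ν : ℝ) : Prop :=
  ∃ c : ℂ, c ≠ 0 ∧ ∀ ε : ℝ, 0 < ε → ∃ Y : ℝ, ∀ z : ℂ, Y ≤ z.im →
    ‖Complex.exp (-(2 * Real.pi * Complex.I * (ν : ℂ) * z / (N : ℂ))) * f z - c‖ < ε


/-- `Γ₀(N)` as a subgroup of `SL(2,ℝ)`. -/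
def Gamma0R (N : ℕ) : Subgroup SL2R := Subgroup.map toR (CongruenceSubgroup.Gamma0 N)

/-- `q = e^{2πiz}`. -/
def qexp (z : ℂ) : ℂ := Complex.exp (2 * Real.pi * Complex.I * z)

/-- `E₂(z) = 1 - 24 ∑_{n≥1} σ₁(n) qⁿ`. -/
def E2 (z : ℂ) : ℂ :=
  1 - 24 * ∑' n : ℕ, (ArithmeticFunction.sigma 1 (n + 1) : ℂ) * qexp z ^ (n + 1)

/-- `E₄(z) = 1 + 240 ∑_{n≥1} σ₃(n) qⁿ`. -/
def E4 (z : ℂ) : ℂ :=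
  1 + 240 * ∑' n : ℕ, (ArithmeticFunction.sigma 3 (n + 1) : ℂ) * qexp z ^ (n + 1)

/-- `M_k(Γ₀⁺(2),ε)`. -/
def MFplus2 (ε : ℂ) (k : ℤ) : Set (ℂ → ℂ) :=
  {f | IsModularForm (Gamma0R 2) (fun _ => 1) k f ∧
    ∀ z ∈ UHP, ((Real.sqrt 2 : ℂ) * z) ^ (-k) * f (-1 / (2 * z)) = ε * f z}

/-- `M₂*(z) = (2E₂(2z) + E₂(z))/3`. -/
def M2star2 (z : ℂ) : ℂ := (2 * E2 (2 * z) + E2 z) / 3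

/-- `M₄(z) = (4E₄(2z) + E₄(z))/5`. -/
def M4plus2 (z : ℂ) : ℂ := (4 * E4 (2 * z) + E4 z) / 5

/-- `P(z) = e^{πikz} ∏_{n≥1} (1-qⁿ)^{4k}(1-q^{2n})^{4k}` (equal to `M₈(z)^{k/2}` where
`M₈ = η(z)⁸η(2z)⁸`; nonvanishing on `ℍ`). -/
def Pfun2 (k : ℕ) (z : ℂ) : ℂ :=
  Complex.exp (Real.pi * Complex.I * k * z) *
    ∏' n : ℕ, ((1 - qexp z ^ (n + 1)) ^ (4 * k) * (1 - qexp z ^ (2 * (n + 1))) ^ (4 * k))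



/-- the filter `Im z → ∞`. -/
abbrev LInf : Filter ℂ := comap Complex.im atTop

lemma uhp_open : IsOpen UHP := isOpen_lt continuous_const Complex.continuous_im

lemma uhp_ev : ∀ᶠ z in LInf, z ∈ UHP := by
  have : ∀ᶠ z in LInf, (0:ℝ) < Complex.im z := tendsto_comap.eventually (eventually_gt_atTop 0)
  exact this

lemma uhp_add {z : ℂ} (hz : z ∈ UHP) : z + 1 ∈ UHP := by
  simpa [UHP] using hz

lemma uhp_ne {z : ℂ} (hz : z ∈ UHP) : z ≠ 0 := by
  rintro rfl; simp [UHP] at hz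

lemma im_W (z : ℂ) : (-1 / (2 * z)).im = z.im / (2 * Complex.normSq z) := by
  rw [Complex.div_im]
  simp [Complex.normSq_mul]
  norm_num [Complex.normSq_apply]
  rcases eq_or_ne (z.re * z.re + z.im * z.im) 0 with h | h
  · rw [h]; simp
  · field_simp
    ring

lemma uhp_W {z : ℂ} (hz : z ∈ UHP) : -1 / (2 * z) ∈ UHP := by
  have : 0 < Complex.normSq z := Complex.normSq_pos.2 (uhp_ne hz)
  have hz' : 0 < z.im := hz
  simp only [UHP, Set.mem_setOf_eq, im_W]
  positivity

lemma int_per {g : ℂ → ℂ} (hT : ∀ z ∈ UHP, g (z + 1) = g z) (z : ℂ) (hz : z ∈ UHP) (m : ℤ) :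
    g (z + m) = g z := by
  have hp : Function.Periodic (fun z => if 0 < z.im then g z else 0) 1 := by
    intro z
    by_cases h : 0 < z.im
    · simpa [h] using hT z h
    · simp [h]
  have := hp.int_mul m z
  have hz' : 0 < z.im := hz
  simpa [hz'] using this

lemma red_step {g : ℂ → ℂ} (hT : ∀ z ∈ UHP, g (z + 1) = g z)
    (hW : ∀ z ∈ UHP, g (-1 / (2 * z)) = g z) (n : ℕ) :
    ∀ z ∈ UHP, 2/5 ≤ z.im * (1.2:ℝ) ^ n → ∃ w ∈ UHP, 2/5 ≤ w.im ∧ g w = g z := by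
  induction n with
  | zero => intro z hz h; exact ⟨z, hz, by simpa using h, rfl⟩
  | succ n ih =>
    intro z hz h
    by_cases h5 : 2/5 ≤ z.im
    · exact ⟨z, hz, h5, rfl⟩
    push Not at h5
    have hz' : 0 < z.im := hz
    set z1 : ℂ := z + ((-round z.re : ℤ) : ℂ) with hz1
    have him : z1.im = z.im := by simp [hz1]
    have hre : |z1.re| ≤ 1/2 := by
      have := abs_sub_round z.re
      simpa [hz1, sub_eq_add_neg] using this
    have h1 : z1 ∈ UHP := by simpa [UHP, him] using hz
    have hg1 : g z1 = g z := int_per hT z hz _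
    have hn : Complex.normSq z1 ≤ 41/100 := by
      rw [Complex.normSq_apply, him]
      have := abs_le.1 hre
      nlinarith
    have hn0 : 0 < Complex.normSq z1 := Complex.normSq_pos.2 (uhp_ne h1)
    have hinc : z.im * 1.2 ≤ (-1 / (2 * z1)).im := by
      rw [im_W, him, le_div_iff₀ (by positivity)]
      nlinarith
    obtain ⟨w, hw, hw5, hgw⟩ := ih (-1 / (2 * z1)) (uhp_W h1) (by
      calc (2/5 : ℝ) ≤ z.im * 1.2 ^ (n+1) := h
        _ = (z.im * 1.2) * 1.2 ^ n := by ring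
        _ ≤ _ := by gcongr)
    exact ⟨w, hw, hw5, by rw [hgw, hW z1 h1, hg1]⟩

lemma red {g : ℂ → ℂ} (hT : ∀ z ∈ UHP, g (z + 1) = g z)
    (hW : ∀ z ∈ UHP, g (-1 / (2 * z)) = g z) :
    ∀ z ∈ UHP, ∃ w ∈ UHP, 2/5 ≤ w.im ∧ g w = g z := by
  intro z hz
  have hz' : 0 < z.im := hz
  obtain ⟨n, hn⟩ := pow_unbounded_of_one_lt ((2/5) / z.im) (by norm_num : (1:ℝ) < 1.2)
  refine red_step hT hW n z hz ?_
  rw [div_lt_iff₀ hz'] at hn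
  linarith

/-- extension by zero below the real axis -/
def ext0 (g : ℂ → ℂ) : ℂ → ℂ := fun z => if 0 < z.im then g z else 0

lemma ext0_eq {g : ℂ → ℂ} {z : ℂ} (hz : z ∈ UHP) : ext0 g z = g z := if_pos hz

lemma ext0_ev (g : ℂ → ℂ) : ext0 g =ᶠ[LInf] g := by
  filter_upwards [uhp_ev] with z hz using ext0_eq hz

lemma ext0_per {g : ℂ → ℂ} (hT : ∀ z ∈ UHP, g (z + 1) = g z) :
    Function.Periodic (ext0 g) ((1:ℝ):ℂ) := by
  intro z
  by_cases h : 0 < z.im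
  · simpa [ext0, h] using hT z h
  · simp [ext0, h]

lemma ext0_diff {g : ℂ → ℂ} (hd : DifferentiableOn ℂ g UHP) {z : ℂ} (hz : z ∈ UHP) :
    DifferentiableAt ℂ (ext0 g) z := by
  refine (hd.differentiableAt (uhp_open.mem_nhds hz)).congr_of_eventuallyEq ?_
  filter_upwards [uhp_open.mem_nhds hz] with w hw using ext0_eq hw

lemma ext0_diff_ev {g : ℂ → ℂ} (hd : DifferentiableOn ℂ g UHP) :
    ∀ᶠ z in LInf, DifferentiableAt ℂ (ext0 g) z := by
  filter_upwards [uhp_ev] with z hz using ext0_diff hd hz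

open Function.Periodic in
lemma const_of_inv {g : ℂ → ℂ} (hd : DifferentiableOn ℂ g UHP)
    (hT : ∀ z ∈ UHP, g (z + 1) = g z) (hW : ∀ z ∈ UHP, g (-1 / (2 * z)) = g z)
    (hb : BoundedAtFilter LInf g) : ∃ c, ∀ z ∈ UHP, g z = c := by
  have hper := ext0_per hT
  have hb' : BoundedAtFilter LInf (ext0 g) := hb.congr' (ext0_ev g).symm (EventuallyEq.refl _ _)
  refine ⟨cuspFunction 1 (ext0 g) 0, fun z hz => ?_⟩
  have key : Set.EqOn (cuspFunction 1 (ext0 g)) (Function.const ℂ (cuspFunction 1 (ext0 g) 0))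
      (Metric.ball 0 1) := by
    refine Complex.eq_const_of_exists_le (r := Real.exp (-2 * Real.pi * (2/5) / 1)) ?_
      (Real.exp_nonneg _) ?_ ?_
    · intro q hq
      apply DifferentiableAt.differentiableWithinAt
      rcases eq_or_ne q 0 with rfl | h0
      · exact differentiableAt_cuspFunction_zero one_pos hper (ext0_diff_ev hd) hb'
      · have : invQParam 1 q ∈ UHP :=
          im_invQParam_pos_of_norm_lt_one Real.zero_lt_one (mem_ball_zero_iff.mp hq) h0
        have h2 := differentiableAt_cuspFunction (h := 1) one_ne_zero hper (ext0_diff hd this)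
        rwa [qParam_right_inv one_ne_zero h0] at h2
    · rw [Real.exp_lt_one_iff]
      have := Real.pi_pos
      linarith
    · intro q hq
      rcases eq_or_ne q 0 with rfl | h0
      · exact ⟨0, by simp [Real.exp_nonneg], le_rfl⟩
      · have hu : invQParam 1 q ∈ UHP :=
          im_invQParam_pos_of_norm_lt_one Real.zero_lt_one (mem_ball_zero_iff.mp hq) h0
        obtain ⟨w, hw, hw5, hgw⟩ := red hT hW _ hu
        refine ⟨qParam 1 w, ?_, ?_⟩
        · rw [mem_closedBall_zero_iff, norm_qParam]
          apply Real.exp_le_exp.2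
          have := Real.pi_pos
          simp only [div_one]
          nlinarith
        · rw [eq_cuspFunction one_ne_zero hper, cuspFunction_eq_of_nonzero _ _ h0,
            ext0_eq hw, ext0_eq hu, hgw]
  have hq : qParam 1 z ∈ Metric.ball (0:ℂ) 1 := by
    rw [mem_ball_zero_iff]; exact norm_qParam_lt_one one_pos hz
  have := key hq
  rw [eq_cuspFunction one_ne_zero hper, ext0_eq hz] at this
  simpa using this

open Function.Periodic in
lemma tendsto_of_bdd {g : ℂ → ℂ} (hd : DifferentiableOn ℂ g UHP)
    (hT : ∀ z ∈ UHP, g (z + 1) = g z)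
    (hb : BoundedAtFilter LInf g) : ∃ c, Tendsto g LInf (𝓝 c) := by
  have hb' : BoundedAtFilter LInf (ext0 g) := hb.congr' (ext0_ev g).symm (EventuallyEq.refl _ _)
  exact ⟨_, (tendsto_at_I_inf one_pos (ext0_per hT) (ext0_diff_ev hd) hb').congr' (ext0_ev g)⟩

open Function.Periodic in
lemma decay_of_zero {g : ℂ → ℂ} (hd : DifferentiableOn ℂ g UHP)
    (hT : ∀ z ∈ UHP, g (z + 1) = g z) (h0 : Tendsto g LInf (𝓝 0)) :
    g =O[LInf] qexp := by
  have h0' : ZeroAtFilter LInf (ext0 g) := h0.congr' (ext0_ev g).symm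
  have := exp_decay_of_zero_at_inf one_pos (ext0_per hT) (ext0_diff_ev hd) h0'
  have h2 := this.congr' (ext0_ev g) (EventuallyEq.refl _ _)
  refine h2.trans (Asymptotics.IsBigO.of_bound 1 (Eventually.of_forall fun z => ?_))
  have h3 := norm_qParam 1 z
  have h4 : qexp z = qParam 1 z := by simp [qexp, qParam]
  rw [h4, h3, Real.norm_of_nonneg (Real.exp_nonneg _), one_mul]

lemma deriv_tendsto {u : ℂ → ℂ} (hd : DifferentiableOn ℂ u UHP) {c : ℂ}
    (h : Tendsto u LInf (𝓝 c)) : Tendsto (deriv u) LInf (𝓝 0) := by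
  rw [Metric.tendsto_nhds] at h ⊢
  intro e he
  have h1 := h (e/2) (by positivity)
  rw [eventually_comap] at h1
  obtain ⟨Y, hY⟩ := eventually_atTop.1 h1
  have h2 : ∀ᶠ z in LInf, max Y 0 + 2 < Complex.im z :=
    tendsto_comap.eventually (eventually_gt_atTop _)
  filter_upwards [h2] with z hz
  have hball : ∀ w ∈ Metric.closedBall z 1, max Y 0 < w.im := by
    intro w hw
    have h3 : |(w - z).im| ≤ 1 := (Complex.abs_im_le_norm _).trans (by simpa [dist_eq_norm] using hw)
    rw [Complex.sub_im] at h3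
    have := abs_le.1 h3
    linarith
  have hdz : DiffContOnCl ℂ (fun w => u w - c) (Metric.ball z 1) := by
    apply DifferentiableOn.diffContOnCl
    rw [closure_ball z one_ne_zero]
    exact (hd.sub_const c).mono fun w hw => lt_of_le_of_lt (le_max_right Y 0) (hball w hw)
  have h4 := Complex.norm_deriv_le_of_forall_mem_sphere_norm_le one_pos hdz (C := e/2) (by
    intro w hw
    have := hY w.im ((le_max_left Y 0).trans (hball w (Metric.sphere_subset_closedBall hw)).le) w rfl
    rw [dist_eq_norm] at this
    exact this.le)
  rw [deriv_sub_const] at h4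
  rw [dist_zero_right]
  linarith


instance linf_neBot : NeBot LInf := by
  rw [comap_neBot_iff_frequently]
  exact (Eventually.of_forall fun y => ⟨⟨0, y⟩, rfl⟩).frequently

lemma qexp_tendsto : Tendsto qexp LInf (𝓝 0) := by
  have := (Function.Periodic.qParam_tendsto (h := 1) one_pos).mono_right nhdsWithin_le_nhds
  refine this.congr fun z => ?_
  simp [qexp, Function.Periodic.qParam]

lemma cusp4_zero {R D : ℂ → ℂ} (hR : DifferentiableOn ℂ R UHP) (hD : DifferentiableOn ℂ D UHP)
    (hD0 : ∀ z ∈ UHP, D z ≠ 0)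
    (hRT : ∀ z ∈ UHP, R (z + 1) = R z) (hDT : ∀ z ∈ UHP, D (z + 1) = D z)
    (hRW : ∀ z ∈ UHP, R (-1 / (2 * z)) = 4 * z ^ 4 * R z)
    (hDW : ∀ z ∈ UHP, D (-1 / (2 * z)) = 16 * z ^ 8 * D z)
    (hR0 : Tendsto R LInf (𝓝 0)) (hDq : qexp =O[LInf] D) : ∀ z ∈ UHP, R z = 0 := by
  have h1 := decay_of_zero hR hRT hR0
  have h2 : (fun z => R z ^ 2 / D z) =O[LInf] qexp := by
    have h3 : (fun z => R z ^ 2) =O[LInf] (fun z => qexp z * D z) := by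
      refine (h1.mul (h1.trans hDq)).congr_left fun z => by ring
    obtain ⟨C, hC⟩ := h3.bound
    refine Asymptotics.IsBigO.of_bound C ?_
    filter_upwards [hC, uhp_ev] with z hz hu
    have hd : 0 < ‖D z‖ := norm_pos_iff.2 (hD0 z hu)
    rw [norm_div, div_le_iff₀ hd, mul_assoc, ← norm_mul]
    exact hz
  have h4 : Tendsto (fun z => R z ^ 2 / D z) LInf (𝓝 0) := h2.trans_tendsto qexp_tendsto
  obtain ⟨c, hc⟩ := const_of_inv (g := fun z => R z ^ 2 / D z) ((hR.pow 2).div hD hD0)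
    (fun z hz => by simp only [hRT z hz, hDT z hz])
    (fun z hz => by
      simp only [hRW z hz, hDW z hz]
      have := hD0 z hz
      have := uhp_ne hz
      field_simp
      ring) (h4.isBigO_one ℝ)
  have hc0 : c = 0 := by
    refine tendsto_nhds_unique ?_ h4
    refine tendsto_const_nhds.congr' ?_
    filter_upwards [uhp_ev] with z hz using (hc z hz).symm
  intro z hz
  have := hc z hz
  simpa [hc0, hD0 z hz] using this

lemma hasDeriv_W {z : ℂ} (hz : z ∈ UHP) :
    HasDerivAt (fun w : ℂ => -1 / (2 * w)) (1 / (2 * z ^ 2)) z := by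
  have h0 := uhp_ne hz
  have := ((hasDerivAt_id z).const_mul 2).inv (by simpa using h0) |>.const_mul (-1)
  refine (this.congr_deriv ?_).congr_of_eventuallyEq ?_
  · simp; field_simp
  · filter_upwards with w
    simp [div_eq_mul_inv]

/-- derivative of a transformation law under `z ↦ -1/(2z)` -/
lemma deriv_W {y F : ℂ → ℂ} (hy : DifferentiableOn ℂ y UHP)
    (hW : ∀ z ∈ UHP, y (-1 / (2 * z)) = F z) {z : ℂ} (hz : z ∈ UHP) {F' : ℂ}
    (hF : HasDerivAt F F' z) : deriv y (-1 / (2 * z)) = 2 * z ^ 2 * F' := by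
  have h1 : HasDerivAt y (deriv y (-1 / (2 * z))) (-1 / (2 * z)) :=
    (hy.differentiableAt (uhp_open.mem_nhds (uhp_W hz))).hasDerivAt
  have h2 := HasDerivAt.comp z h1 (hasDeriv_W hz)
  have h3 : HasDerivAt (y ∘ fun w : ℂ => -1 / (2 * w)) F' z := by
    refine hF.congr_of_eventuallyEq ?_
    filter_upwards [uhp_open.mem_nhds hz] with w hw using hW w hw
  have h4 := h2.unique h3
  have := uhp_ne hz
  rw [← h4]
  field_simp

lemma deriv_T {y : ℂ → ℂ} {e : ℂ} (hT : ∀ z ∈ UHP, y (z + 1) = e * y z) :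
    ∀ z ∈ UHP, deriv y (z + 1) = e * deriv y z := by
  intro z hz
  rw [← deriv_comp_add_const, ← deriv_const_mul_field]
  apply Filter.EventuallyEq.deriv_eq
  filter_upwards [uhp_open.mem_nhds hz] with w hw using hT w hw

lemma wr_ne {y g : ℂ → ℂ} {β e : ℂ} (he : e ^ 2 = 1) (hβ : β ≠ 0)
    (hy : DifferentiableOn ℂ y UHP) (hg : DifferentiableOn ℂ g UHP)
    (hyT : ∀ z ∈ UHP, y (z + 1) = e * y z) (hgT : ∀ z ∈ UHP, g (z + 1) = e * g z)
    (hne : ∀ᶠ z in LInf, y z ≠ 0)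
    (hw : ∀ z ∈ UHP, y z ^ 2 + β * (y z * deriv g z - g z * deriv y z) = 0) : False := by
  have he0 : e ≠ 0 := by rintro rfl; simp at he
  rw [eventually_comap] at hne
  obtain ⟨Y, hY⟩ := eventually_atTop.1 hne
  set Z := max Y 0
  let S : Set ℂ := {z | Z < z.im}
  have hSo : IsOpen S := isOpen_lt continuous_const Complex.continuous_im
  have hSc : Convex ℝ S := convex_halfSpace_im_gt Z
  have hSU : ∀ z ∈ S, z ∈ UHP := fun z hz => lt_of_le_of_lt (le_max_right Y 0) hz
  have hS0 : ∀ z ∈ S, y z ≠ 0 := fun z hz => hY z.im ((le_max_left Y 0).trans (le_of_lt hz)) z rfl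
  have hder : ∀ z ∈ S, HasDerivAt (fun z => g z / y z + z / β) 0 z := by
    intro z hz
    have h1 := (hy.differentiableAt (uhp_open.mem_nhds (hSU z hz))).hasDerivAt
    have h2 := (hg.differentiableAt (uhp_open.mem_nhds (hSU z hz))).hasDerivAt
    have h3 := (h2.div h1 (hS0 z hz)).add ((hasDerivAt_id z).div_const β)
    refine h3.congr_deriv ?_
    have := hS0 z hz
    have h4 := hw z (hSU z hz)
    field_simp
    linear_combination h4
  let z0 : ℂ := ⟨0, Z + 1⟩
  have hz0 : z0 ∈ S := by simp [S, z0]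
  have hz1 : z0 + 1 ∈ S := by simp [S, z0]
  have := hSo.is_const_of_deriv_eq_zero hSc.isPreconnected
    (fun z hz => (hder z hz).differentiableAt.differentiableWithinAt)
    (fun z hz => (hder z hz).deriv) hz0 hz1
  simp only [hyT z0 (hSU _ hz0), hgT z0 (hSU _ hz0)] at this
  have h0 := hS0 z0 hz0
  field_simp at this
  apply h0
  linear_combination -this

lemma exp_bdd (k : ℕ) : BoundedAtFilter LInf (fun z => Complex.exp (Real.pi * Complex.I * k * z)) := by
  refine Asymptotics.IsBigO.of_bound 1 ?_
  filter_upwards [uhp_ev] with z hz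
  have hz' : 0 < z.im := hz
  have := Real.pi_pos
  simp [Complex.norm_exp]
  positivity

lemma core {y g M D : ℂ → ℂ} {β e c v0 : ℂ} {k : ℕ} (he : e ^ 2 = 1) (hβ : β ≠ 0)
    (hy : DifferentiableOn ℂ y UHP) (hg : DifferentiableOn ℂ g UHP)
    (hyT : ∀ z ∈ UHP, y (z + 1) = e * y z) (hgT : ∀ z ∈ UHP, g (z + 1) = e * g z)
    (hyW : ∀ z ∈ UHP, y (-1 / (2 * z)) = e * (y z + β * g z / z))
    (hgW : ∀ z ∈ UHP, g (-1 / (2 * z)) = e * g z / (2 * z ^ 2))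
    (hc : c ≠ 0)
    (hyc : Tendsto (fun z => Complex.exp (-(Real.pi * Complex.I * k * z)) * y z) LInf (𝓝 c))
    (hgc : Tendsto (fun z => Complex.exp (Real.pi * Complex.I * k * z) * g z) LInf (𝓝 v0))
    (hM : DifferentiableOn ℂ M UHP) (hD : DifferentiableOn ℂ D UHP)
    (hD0 : ∀ z ∈ UHP, D z ≠ 0)
    (hMT : ∀ z ∈ UHP, M (z + 1) = M z) (hDT : ∀ z ∈ UHP, D (z + 1) = D z)
    (hMW : ∀ z ∈ UHP, M (-1 / (2 * z)) = 4 * z ^ 4 * M z)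
    (hDW : ∀ z ∈ UHP, D (-1 / (2 * z)) = 16 * z ^ 8 * D z)
    (hM1 : Tendsto M LInf (𝓝 1)) (hDq : qexp =O[LInf] D) :
    ∀ z ∈ UHP, deriv (deriv y) z = (Real.pi * Complex.I * k) ^ 2 * M z * y z := by
  set s : ℂ := Real.pi * Complex.I * k with hs
  have hy1 : DifferentiableOn ℂ (deriv y) UHP := hy.deriv uhp_open
  have hg1 : DifferentiableOn ℂ (deriv g) UHP := hg.deriv uhp_open
  have hy2 : DifferentiableOn ℂ (deriv (deriv y)) UHP := hy1.deriv uhp_open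
  have hg2 : DifferentiableOn ℂ (deriv (deriv g)) UHP := hg1.deriv uhp_open
  have H : ∀ {h : ℂ → ℂ}, DifferentiableOn ℂ h UHP → ∀ {z}, z ∈ UHP → HasDerivAt h (deriv h z) z :=
    fun hh z hz => (hh.differentiableAt (uhp_open.mem_nhds hz)).hasDerivAt
  -- T laws
  have hy1T := deriv_T hyT
  have hg1T := deriv_T hgT
  have hy2T := deriv_T hy1T
  have hg2T := deriv_T hg1T
  -- W laws
  have hy1W : ∀ z ∈ UHP, deriv y (-1 / (2 * z)) =
      e * (2 * z ^ 2 * deriv y z + 2 * β * z * deriv g z - 2 * β * g z) := by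
    intro z hz
    have h0 := uhp_ne hz
    rw [deriv_W hy hyW hz
      (((H hy hz).add (((H hg hz).const_mul β).div (hasDerivAt_id z) h0)).const_mul e)]
    simp only [id]
    field_simp
    ring
  have hg1W : ∀ z ∈ UHP, deriv g (-1 / (2 * z)) = e * (deriv g z - 2 * g z / z) := by
    intro z hz
    have h0 := uhp_ne hz
    rw [deriv_W hg hgW hz
      (((H hg hz).const_mul e).div (((hasDerivAt_id z).pow 2).const_mul 2) (by simpa using h0))]
    simp
    field_simp
  have hy2W : ∀ z ∈ UHP, deriv (deriv y) (-1 / (2 * z)) =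
      e * (8 * z ^ 3 * deriv y z + 4 * z ^ 4 * deriv (deriv y) z
        + 4 * β * z ^ 3 * deriv (deriv g) z) := by
    intro z hz
    have h0 := uhp_ne hz
    rw [deriv_W hy1 hy1W hz
      ((((((hasDerivAt_id z).pow 2).const_mul 2).mul (H hy1 hz)).add
        (((hasDerivAt_id z).const_mul (2 * β)).mul (H hg1 hz)) |>.sub
        ((H hg hz).const_mul (2 * β))).const_mul e)]
    simp
    ring
  have hg2W : ∀ z ∈ UHP, deriv (deriv g) (-1 / (2 * z)) =
      e * (2 * z ^ 2 * deriv (deriv g) z - 4 * z * deriv g z + 4 * g z) := by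
    intro z hz
    have h0 := uhp_ne hz
    rw [deriv_W hg1 hg1W hz
      (((H hg1 hz).sub (((H hg hz).const_mul 2).div (hasDerivAt_id z) h0)).const_mul e)]
    simp only [id]
    field_simp
    ring
  -- behaviour at infinity
  set u : ℂ → ℂ := fun z => Complex.exp (-(s * z)) * y z with hu
  set v : ℂ → ℂ := fun z => Complex.exp (s * z) * g z with hv
  have hud : DifferentiableOn ℂ u UHP := DifferentiableOn.mul (by fun_prop) hy
  have hvd : DifferentiableOn ℂ v UHP := DifferentiableOn.mul (by fun_prop) hg
  have hu1 := deriv_tendsto hud hyc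
  have hv1 := deriv_tendsto hvd hgc
  have hud1 := hud.deriv uhp_open
  have hu2 := deriv_tendsto hud1 hu1
  have yu : ∀ z, y z = Complex.exp (s * z) * u z := by
    intro z; simp only [hu, ← mul_assoc, ← Complex.exp_add]; simp
  have gv : ∀ z, g z = Complex.exp (-(s * z)) * v z := by
    intro z; simp only [hv, ← mul_assoc, ← Complex.exp_add]; simp
  have hE : ∀ z, HasDerivAt (fun z => Complex.exp (s * z)) (Complex.exp (s * z) * s) z := by
    intro z; simpa using ((hasDerivAt_id z).const_mul s).cexp
  have hE' : ∀ z, HasDerivAt (fun z => Complex.exp (-(s * z))) (-(Complex.exp (-(s * z)) * s)) z := by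
    intro z; simpa using ((hasDerivAt_id z).const_mul s).neg.cexp
  have y1u : ∀ z ∈ UHP, deriv y z = Complex.exp (s * z) * (deriv u z + s * u z) := by
    intro z hz
    have := (hE z).mul (H hud hz)
    rw [show y = _ from funext yu]; refine (HasDerivAt.deriv this).trans ?_; ring
  have g1v : ∀ z ∈ UHP, deriv g z = Complex.exp (-(s * z)) * (deriv v z - s * v z) := by
    intro z hz
    have := (hE' z).mul (H hvd hz)
    rw [show g = _ from funext gv]; refine (HasDerivAt.deriv this).trans ?_; ring
  have y2u : ∀ z ∈ UHP, deriv (deriv y) z =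
      Complex.exp (s * z) * (deriv (deriv u) z + 2 * s * deriv u z + s ^ 2 * u z) := by
    intro z hz
    have h1 := (hE z).mul ((H hud1 hz).add ((H hud hz).const_mul s))
    have h2 : deriv y =ᶠ[𝓝 z] (fun z => Complex.exp (s * z)) * (deriv u + fun z => s * u z) := by
      filter_upwards [uhp_open.mem_nhds hz] with w hw using y1u w hw
    rw [h2.deriv_eq, HasDerivAt.deriv h1]
    simp; ring
  have hune : ∀ᶠ z in LInf, u z ≠ 0 := hyc.eventually_ne hc
  have hyne : ∀ᶠ z in LInf, y z ≠ 0 := by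
    filter_upwards [hune] with z hz h
    apply hz; simp [hu, h]
  -- the Wronskian
  set w : ℂ → ℂ := fun z => y z ^ 2 + β * (y z * deriv g z - g z * deriv y z) with hw
  have hwb : BoundedAtFilter LInf w := by
    have h1 : Tendsto (fun z => β * (u z * (deriv v z - s * v z) - v z * (deriv u z + s * u z))) LInf
        (𝓝 (β * (c * (0 - s * v0) - v0 * (0 + s * c)))) :=
      ((hyc.mul (hv1.sub (hgc.const_mul s))).sub (hgc.mul (hu1.add (hyc.const_mul s)))).const_mul β
    have h2 : BoundedAtFilter LInf (fun z => Complex.exp (s * z) * u z) := 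
      (exp_bdd k).mul (hyc.isBigO_one ℝ)
    have h3 : BoundedAtFilter LInf (fun z => (Complex.exp (s * z) * u z) * (Complex.exp (s * z) * u z)
        + β * (u z * (deriv v z - s * v z) - v z * (deriv u z + s * u z))) :=
      (h2.mul h2).add (h1.isBigO_one ℝ)
    refine h3.congr' ?_ (EventuallyEq.refl _ _)
    filter_upwards [uhp_ev] with z hz
    simp only [hw]
    rw [g1v z hz, y1u z hz, yu z, gv z]
    have : Complex.exp (s * z) * Complex.exp (-(s * z)) = 1 := by rw [← Complex.exp_add]; simp
    linear_combination -(β * (u z * (deriv v z - s * v z) - v z * (deriv u z + s * u z))) * this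
  obtain ⟨W0, hW0⟩ := const_of_inv (g := w)
    ((hy.pow 2).add (((hy.mul hg1).sub (hg.mul hy1)).const_mul β))
    (fun z hz => by
      simp only [hw, hyT z hz, hgT z hz, hy1T z hz, hg1T z hz]
      linear_combination (y z ^ 2 + β * (y z * deriv g z - g z * deriv y z)) * he)
    (fun z hz => by
      simp only [hw, hyW z hz, hgW z hz, hy1W z hz, hg1W z hz]
      have h0 := uhp_ne hz
      field_simp
      linear_combination (y z ^ 2 + β * (y z * deriv g z - g z * deriv y z)) * z ^ 2 * he) hwb
  have hWne : W0 ≠ 0 := by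
    intro h
    exact wr_ne he hβ hy hg hyT hgT hyne (fun z hz => (hW0 z hz).trans h)
  have hw' : ∀ z ∈ UHP, 2 * y z * deriv y z
      + β * (y z * deriv (deriv g) z - g z * deriv (deriv y) z) = 0 := by
    intro z hz
    have h1 := ((H hy hz).pow 2).add ((((H hy hz).mul (H hg1 hz)).sub
      ((H hg hz).mul (H hy1 hz))).const_mul β)
    have h2 : HasDerivAt w 0 z := by
      refine (hasDerivAt_const z W0).congr_of_eventuallyEq ?_
      filter_upwards [uhp_open.mem_nhds hz] with w hw using hW0 w hw
    have h3 := h1.unique h2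
    simp at h3
    linear_combination h3
  set Q : ℂ → ℂ := fun z => (deriv (deriv y) z * y z - 2 * deriv y z ^ 2 +
    β * (deriv (deriv y) z * deriv g z - deriv (deriv g) z * deriv y z)) / W0 with hQ
  have hQd : DifferentiableOn ℂ Q UHP :=
    (((hy2.mul hy).sub ((hy1.pow 2).const_mul 2)).add
      (((hy2.mul hg1).sub (hg2.mul hy1)).const_mul β)).div_const W0
  have hQy : ∀ z ∈ UHP, deriv (deriv y) z = Q z * y z := by
    intro z hz
    have h1 := hw' z hz
    have h2 : y z ^ 2 + β * (y z * deriv g z - g z * deriv y z) = W0 := hW0 z hz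
    simp only [hQ]
    field_simp
    rw [← h2]
    linear_combination (deriv y z) * h1
  have hQT : ∀ z ∈ UHP, Q (z + 1) = Q z := by
    intro z hz
    simp only [hQ, hyT z hz, hgT z hz, hy1T z hz, hg1T z hz, hy2T z hz, hg2T z hz]
    congr 1
    linear_combination (deriv (deriv y) z * y z - 2 * deriv y z ^ 2 +
      β * (deriv (deriv y) z * deriv g z - deriv (deriv g) z * deriv y z)) * he
  have hQW : ∀ z ∈ UHP, Q (-1 / (2 * z)) = 4 * z ^ 4 * Q z := by
    intro z hz
    have h1 := hw' z hz
    have h0 := uhp_ne hz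
    simp only [hQ, hyW z hz, hgW z hz, hy1W z hz, hg1W z hz, hy2W z hz, hg2W z hz]
    rw [← mul_div_assoc]
    congr 1
    field_simp
    linear_combination (exp := 1) e ^ 2 * 4 * z ^ 3 * h1 + (4 * z ^ 4 * (deriv (deriv y) z * y z - 2 * deriv y z ^ 2 +
      β * (deriv (deriv y) z * deriv g z - deriv (deriv g) z * deriv y z))) * he
  have hQinf : Tendsto Q LInf (𝓝 (s ^ 2)) := by
    have h1 : Tendsto (fun z => (deriv (deriv u) z + 2 * s * deriv u z + s ^ 2 * u z) / u z) LInf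
        (𝓝 ((0 + 2 * s * 0 + s ^ 2 * c) / c)) :=
      ((hu2.add (hu1.const_mul _)).add (hyc.const_mul _)).div hyc hc
    rw [show (0 + 2 * s * 0 + s ^ 2 * c) / c = s ^ 2 by field_simp; ring] at h1
    refine h1.congr' ?_
    filter_upwards [uhp_ev, hune] with z hz h0
    have h2 := hQy z hz
    rw [y2u z hz, yu z] at h2
    have := Complex.exp_ne_zero (s * z)
    rw [div_eq_iff h0]
    apply mul_left_cancel₀ this
    rw [h2]; ring
  have hR := cusp4_zero (R := fun z => Q z - s ^ 2 * M z) (hQd.sub (hM.const_mul _)) hD hD0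
    (fun z hz => by simp only [hQT z hz, hMT z hz]) hDT
    (fun z hz => by simp only [hQW z hz, hMW z hz]; ring) hDW
    (by
      have h9 := hQinf.sub (hM1.const_mul (s ^ 2))
      have h8 : s ^ 2 - s ^ 2 * 1 = 0 := by ring
      rw [h8] at h9
      exact h9) hDq
  intro z hz
  rw [hQy z hz, sub_eq_zero.1 (hR z hz)]


lemma E2_eq {z : ℂ} (hz : z ∈ UHP) : E2 z = EisensteinSeries.E2 ⟨z, hz⟩ := by
  rw [EisensteinSeries.E2_eq_tsum_cexp, tsum_pnat_eq_tsum_succ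
    (f := fun n ↦ (ArithmeticFunction.sigma 1 n : ℂ) * cexp (2 * Real.pi * Complex.I * z) ^ n)]
  rfl

lemma E4_eq {z : ℂ} (hz : z ∈ UHP) : E4 z = ModularForm.E₄ ⟨z, hz⟩ := by
  rw [EisensteinSeries.q_expansion_bernoulli (by norm_num) (by decide)]
  have hb : bernoulli 4 = -1/30 := by
    rw [bernoulli_eq_bernoulli'_of_ne_one (by norm_num), bernoulli'_four]
  have := tsum_pnat_eq_tsum_succ
    (f := fun n ↦ (ArithmeticFunction.sigma 3 n : ℂ) * cexp (2 * Real.pi * Complex.I * z) ^ n)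
  simp only [zpow_natCast, hb]
  norm_num
  rw [this]
  simp [E4, qexp]

lemma E2_S {z : ℂ} (hz : z ∈ UHP) : E2 (-1 / z) = z ^ 2 * E2 z + 6 * z / (Real.pi * Complex.I) := by
  have h := congrFun (EisensteinSeries.E2_slash_action ModularGroup.S) ⟨z, hz⟩
  have h0 := uhp_ne hz
  have hW : -1 / z ∈ UHP := by
    have := UpperHalfPlane.im_inv_neg_coe_pos ⟨z, hz⟩
    have h2 : (-z)⁻¹ = -1 / z := by rw [inv_neg]; field_simp
    simpa [UHP, h2] using this
  rw [SlashInvariantForm.slash_S_apply] at h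
  simp only [Pi.sub_apply, Pi.smul_apply, EisensteinSeries.D2_S, smul_eq_mul, riemannZeta_two] at h
  rw [E2_eq hW, E2_eq hz]
  have h3 : (⟨-1/z, hW⟩ : UpperHalfPlane) = UpperHalfPlane.mk (-(⟨z, hz⟩ : UpperHalfPlane) : ℂ)⁻¹
      (UpperHalfPlane.im_inv_neg_coe_pos ⟨z, hz⟩) := by
    ext
    simp [inv_neg]
    field_simp
  rw [h3]
  have hpi : (Real.pi : ℂ) ≠ 0 := by exact_mod_cast Real.pi_ne_zero
  simp only [UpperHalfPlane.coe_mk] at h ⊢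
  generalize EisensteinSeries.E2 (UpperHalfPlane.mk (-z)⁻¹ _) = X at *
  generalize EisensteinSeries.E2 ⟨z, hz⟩ = Y at *
  have h5 : X = z ^ 2 * (X * z ^ (-2 : ℤ)) := by
    rw [_root_.zpow_neg]; field_simp
  rw [h5, h]
  field_simp
  ring_nf
  simp
  ring

lemma E4_S {z : ℂ} (hz : z ∈ UHP) : E4 (-1 / z) = z ^ 4 * E4 z := by
  have h0 := uhp_ne hz
  have hW : -1 / z ∈ UHP := by
    have := UpperHalfPlane.im_inv_neg_coe_pos ⟨z, hz⟩
    have h2 : (-z)⁻¹ = -1 / z := by rw [inv_neg]; field_simp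
    simpa [UHP, h2] using this
  have h := congrFun (ModularForm.E₄.slash_action_eq' _
    (MonoidHom.mem_range.mpr ⟨ModularGroup.S, rfl⟩)) ⟨z, hz⟩
  have h' := SlashInvariantForm.slash_S_apply ModularForm.E₄ 4 ⟨z, hz⟩
  have h6 := h'.symm.trans h
  rw [E4_eq hW, E4_eq hz]
  have h3 : (⟨-1/z, hW⟩ : UpperHalfPlane) = UpperHalfPlane.mk (-(⟨z, hz⟩ : UpperHalfPlane) : ℂ)⁻¹
      (UpperHalfPlane.im_inv_neg_coe_pos ⟨z, hz⟩) := by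
    ext
    simp [inv_neg]
    field_simp
  rw [h3]
  have h7 : ModularForm.E₄ (UpperHalfPlane.mk (-(⟨z, hz⟩ : UpperHalfPlane) : ℂ)⁻¹
      (UpperHalfPlane.im_inv_neg_coe_pos ⟨z, hz⟩)) * z ^ (-4 : ℤ) = ModularForm.E₄ ⟨z, hz⟩ := h6
  rw [← h7, _root_.zpow_neg]
  field_simp

lemma two_uhp {z : ℂ} (hz : z ∈ UHP) : 2 * z ∈ UHP := by
  have hz' : 0 < z.im := hz
  simpa [UHP] using hz'

lemma M2_W {z : ℂ} (hz : z ∈ UHP) :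
    M2star2 (-1 / (2 * z)) = 2 * z ^ 2 * (M2star2 z + 4 / (Real.pi * Complex.I) / z) := by
  have h0 := uhp_ne hz
  have hpi : (Real.pi : ℂ) ≠ 0 := by exact_mod_cast Real.pi_ne_zero
  have e : 2 * (-1 / (2 * z)) = -1 / z := by field_simp
  rw [M2star2, e, E2_S hz, E2_S (two_uhp hz), M2star2]
  field_simp
  ring

lemma M4_W {z : ℂ} (hz : z ∈ UHP) : M4plus2 (-1 / (2 * z)) = 4 * z ^ 4 * M4plus2 z := by
  have h0 := uhp_ne hz
  have e : 2 * (-1 / (2 * z)) = -1 / z := by field_simp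
  rw [M4plus2, e, E4_S hz, E4_S (two_uhp hz), M4plus2]
  ring

lemma qexp_add (z : ℂ) : qexp (z + 1) = qexp z := by
  rw [qexp, mul_add, Complex.exp_add, mul_one, Complex.exp_two_pi_mul_I, mul_one, qexp]

lemma qexp_two_mul (z : ℂ) : qexp (2 * z) = qexp z ^ 2 := by
  rw [qexp, qexp, ← Complex.exp_nat_mul]; congr 1; push_cast; ring

lemma E2_congr {z w : ℂ} (h : qexp z = qexp w) : E2 z = E2 w := by simp only [E2, h]
lemma E4_congr {z w : ℂ} (h : qexp z = qexp w) : E4 z = E4 w := by simp only [E4, h]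

lemma M2_T (z : ℂ) : M2star2 (z + 1) = M2star2 z := by
  rw [M2star2, M2star2, E2_congr (qexp_add z), E2_congr (w := 2 * z) (by
    rw [qexp_two_mul, qexp_two_mul, qexp_add])]

lemma M4_T (z : ℂ) : M4plus2 (z + 1) = M4plus2 z := by
  rw [M4plus2, M4plus2, E4_congr (qexp_add z), E4_congr (w := 2 * z) (by
    rw [qexp_two_mul, qexp_two_mul, qexp_add])]

lemma E2_diff : DifferentiableOn ℂ E2 UHP := by
  have := UpperHalfPlane.mdifferentiable_iff.1 E2_mdifferentiable
  refine this.congr fun z hz => ?_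
  rw [E2_eq hz]
  simp [UpperHalfPlane.ofComplex_apply_of_im_pos hz]

lemma E4_diff : DifferentiableOn ℂ E4 UHP := by
  have := UpperHalfPlane.mdifferentiable_iff.1 ModularForm.E₄.holo'
  refine this.congr fun z hz => ?_
  rw [E4_eq hz]
  simp [UpperHalfPlane.ofComplex_apply_of_im_pos hz]

lemma M2_diff : DifferentiableOn ℂ M2star2 UHP :=
  (((E2_diff.comp (by fun_prop) (fun z hz => two_uhp hz)).const_mul 2).add E2_diff).div_const 3

lemma M4_diff : DifferentiableOn ℂ M4plus2 UHP :=
  (((E4_diff.comp (by fun_prop) (fun z hz => two_uhp hz)).const_mul 4).add E4_diff).div_const 5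

lemma norm_qexp (z : ℂ) : ‖qexp z‖ = Real.exp (-(2 * Real.pi * z.im)) := by
  simp [qexp, Complex.norm_exp]

lemma E4_inf : Tendsto E4 LInf (𝓝 1) := by
  have hs := EisensteinSeries.summable_sigma_mul_cexp_pow (k := 4) (by norm_num) UpperHalfPlane.I
  have hs2 := ((summable_nat_add_iff 1).mpr hs).norm
  have h1 : Tendsto (fun z => ∑' n : ℕ, (ArithmeticFunction.sigma 3 (n + 1) : ℂ) * qexp z ^ (n + 1))
      LInf (𝓝 (∑' n : ℕ, (ArithmeticFunction.sigma 3 (n + 1) : ℂ) * 0 ^ (n + 1))) := by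
    refine tendsto_tsum_of_dominated_convergence hs2 (fun n => (qexp_tendsto.pow (n + 1)).const_mul _) ?_
    have h2 : ∀ᶠ z in LInf, (1:ℝ) ≤ Complex.im z := tendsto_comap.eventually (eventually_ge_atTop 1)
    filter_upwards [h2] with z hz n
    have h3 : ‖qexp z‖ ≤ ‖qexp Complex.I‖ := by
      rw [norm_qexp, norm_qexp]
      have := Real.pi_pos
      apply Real.exp_le_exp.2
      simp
      nlinarith
    have h4 : cexp (2 * Real.pi * Complex.I * (UpperHalfPlane.I : ℂ)) = qexp Complex.I := rfl
    rw [h4, norm_mul, norm_mul, norm_pow, norm_pow]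
    gcongr
  have h2 : Tendsto E4 LInf _ := (h1.const_mul 240).const_add 1
  simpa using h2

lemma two_linf : Tendsto (fun z : ℂ => 2 * z) LInf LInf := by
  rw [tendsto_comap_iff]
  have : Complex.im ∘ (fun z : ℂ => 2 * z) = fun z => 2 * z.im := by ext; simp
  rw [this]
  exact tendsto_comap.const_mul_atTop two_pos

lemma M4_inf : Tendsto M4plus2 LInf (𝓝 1) := by
  have := (((E4_inf.comp two_linf).const_mul 4).add E4_inf).div_const 5
  norm_num at this
  exact this


/-- Euler product. -/
def Aq (q : ℂ) : ℂ := ∏' n : ℕ, (1 - q ^ (n + 1))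

lemma qexp_lt {z : ℂ} (hz : z ∈ UHP) : ‖qexp z‖ < 1 := by
  rw [norm_qexp, Real.exp_lt_one_iff]
  have : 0 < z.im := hz
  have := Real.pi_pos
  have : 0 < 2 * Real.pi * z.im := by positivity
  linarith

lemma Pfun2_Aq (k : ℕ) {z : ℂ} (hz : z ∈ UHP) :
    Pfun2 k z = cexp (Real.pi * Complex.I * k * z) * (Aq (qexp z) * Aq (qexp (2 * z))) ^ (4 * k) := by
  have h1 := ModularForm.multipliable_one_sub_pow (qexp_lt hz)
  have h2 := ModularForm.multipliable_one_sub_pow (qexp_lt (two_uhp hz))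
  rw [Pfun2, Aq, Aq, ← h1.tprod_mul h2, ← (h1.mul h2).tprod_pow]
  congr 1
  refine tprod_congr fun n => ?_
  rw [mul_pow, qexp_two_mul, ← pow_mul]

lemma eta_Aq (z : ℂ) : ModularForm.eta z = cexp (2 * Real.pi * Complex.I * z / 24) * Aq (qexp z) := by
  simp [ModularForm.eta, Aq, qexp, Function.Periodic.qParam, ModularForm.eta_q]

lemma Pfun2_eta (k : ℕ) {z : ℂ} (hz : z ∈ UHP) :
    Pfun2 k z = (ModularForm.eta z * ModularForm.eta (2 * z)) ^ (4 * k) := by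
  rw [Pfun2_Aq k hz, eta_Aq, eta_Aq]
  rw [show cexp (2 * Real.pi * Complex.I * z / 24) * Aq (qexp z) *
    (cexp (2 * Real.pi * Complex.I * (2 * z) / 24) * Aq (qexp (2 * z))) =
    cexp (2 * Real.pi * Complex.I * z / 24 + 2 * Real.pi * Complex.I * (2 * z) / 24) *
    (Aq (qexp z) * Aq (qexp (2 * z))) by rw [Complex.exp_add]; ring]
  rw [mul_pow (cexp _), ← Complex.exp_nat_mul]
  congr 2
  push_cast
  ring

lemma Pfun2_ne (k : ℕ) {z : ℂ} (hz : z ∈ UHP) : Pfun2 k z ≠ 0 := by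
  rw [Pfun2_eta k hz]
  exact pow_ne_zero _ (mul_ne_zero (ModularForm.eta_ne_zero hz) (ModularForm.eta_ne_zero (two_uhp hz)))

lemma eta_diff : DifferentiableOn ℂ ModularForm.eta UHP := fun z hz =>
  (ModularForm.differentiableAt_eta_of_mem_upperHalfPlaneSet hz).differentiableWithinAt

lemma Pfun2_diff (k : ℕ) : DifferentiableOn ℂ (Pfun2 k) UHP := by
  have : DifferentiableOn ℂ (fun z => (ModularForm.eta z * ModularForm.eta (2 * z)) ^ (4 * k)) UHP :=
    (eta_diff.mul (eta_diff.comp (by fun_prop) (fun z hz => two_uhp hz))).pow _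
  exact this.congr fun z hz => Pfun2_eta k hz

lemma csqrt4 {w : ℂ} (hw : w ≠ 0) : Complex.sqrt w ^ 4 = w ^ 2 := by
  rw [show Complex.sqrt w = cexp (Complex.log w / 2) by
    simp [Complex.sqrt, Complex.cpow_def_of_ne_zero hw]; ring_nf]
  rw [← Complex.exp_nat_mul,
    show ((4:ℕ):ℂ) * (Complex.log w / 2) = (2:ℕ) * Complex.log w by push_cast; ring,
    Complex.exp_nat_mul, Complex.exp_log hw]

lemma eta_S {z : ℂ} (hz : z ∈ UHP) : ModularForm.eta (-1 / z) ^ 4 = -(z ^ 2 * ModularForm.eta z ^ 4) := by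
  have h : ModularForm.eta (-1 / z) = (Complex.sqrt Complex.I)⁻¹ * (Complex.sqrt z * ModularForm.eta z) := by
    simpa using ModularForm.eta_comp_eq_csqrt_I_inv hz
  rw [h, mul_pow, mul_pow, inv_pow, csqrt4 (uhp_ne hz), csqrt4 Complex.I_ne_zero, Complex.I_sq]
  norm_num

lemma Pfun2_W (k : ℕ) {z : ℂ} (hz : z ∈ UHP) :
    Pfun2 k (-1 / (2 * z)) = (4 * z ^ 4) ^ k * Pfun2 k z := by
  have e : 2 * (-1 / (2 * z)) = -1 / z := by have := uhp_ne hz; field_simp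
  rw [Pfun2_eta k hz, Pfun2_eta k (uhp_W hz), pow_mul, pow_mul, ← mul_pow, e, mul_pow,
    eta_S hz, eta_S (two_uhp hz)]
  ring

lemma Pfun2_T (k : ℕ) (z : ℂ) : Pfun2 k (z + 1) = (-1) ^ k * Pfun2 k z := by
  rw [Pfun2, Pfun2, qexp_add, mul_add, Complex.exp_add,
    show (Real.pi : ℂ) * Complex.I * k * 1 = (k:ℕ) * (Real.pi * Complex.I) by ring,
    Complex.exp_nat_mul, Complex.exp_pi_mul_I]
  ring

lemma Aq_tendsto : Tendsto Aq (𝓝 0) (𝓝 1) := by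
  have h := (ModularForm.differentiableOn_tprod_one_sub_pow.differentiableAt
    (Metric.ball_mem_nhds (0:ℂ) one_pos)).continuousAt
  have h2 : Tendsto Aq (𝓝 0) (𝓝 (∏' n : ℕ, (1 - (0:ℂ) ^ (n + 1)))) := h
  simpa using h2

lemma Pfun2_inf (k : ℕ) : Tendsto (fun z => cexp (-(Real.pi * Complex.I * k * z)) * Pfun2 k z) LInf (𝓝 1) := by
  have h1 := ((Aq_tendsto.comp qexp_tendsto).mul
    (Aq_tendsto.comp (qexp_tendsto.comp two_linf))).pow (4 * k)
  simp only [mul_one, one_pow] at h1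
  refine h1.congr' ?_
  filter_upwards [uhp_ev] with z hz
  rw [Pfun2_Aq k hz, ← mul_assoc, ← Complex.exp_add]
  simp

lemma qexp_O : qexp =O[LInf] Pfun2 2 := by
  have h := Pfun2_inf 2
  have h2 : Tendsto (fun z => (cexp (-(Real.pi * Complex.I * (2:ℕ) * z)) * Pfun2 2 z)⁻¹) LInf (𝓝 1) := by
    simpa using h.inv₀ one_ne_zero
  have h3 := (h2.isBigO_one ℂ).mul (Asymptotics.isBigO_refl (Pfun2 2) LInf)
  refine (h3.congr' ?_ ?_)
  · filter_upwards [uhp_ev] with z hz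
    rw [mul_inv, mul_assoc, inv_mul_cancel₀ (Pfun2_ne 2 hz), ← Complex.exp_neg, qexp]
    congr 1
    push_cast
    ring_nf
  · filter_upwards with z
    simp


/-- translation matrix -/
def Tm : SL2Z := ⟨!![1, 1; 0, 1], by simp [Matrix.det_fin_two]⟩

lemma T_mem : toR Tm ∈ Gamma0R 2 :=
  Subgroup.mem_map_of_mem _ (by
    rw [CongruenceSubgroup.Gamma0_mem]
    have : Tm 1 0 = 0 := rfl
    rw [this]; simp)

lemma Tm_val (i j : Fin 2) : (toR Tm).1 i j = ((Tm.1 i j : ℤ) : ℝ) := rfl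

lemma mf_T {f : ℂ → ℂ} {n : ℤ} (hf : IsModularForm (Gamma0R 2) (fun _ => 1) n f) {z : ℂ} (hz : z ∈ UHP) :
    f (z + 1) = f z := by
  have := hf.transform _ T_mem z hz
  simp only [moeb, jfac, Tm_val] at this
  have e00 : Tm.1 0 0 = 1 := rfl
  have e01 : Tm.1 0 1 = 1 := rfl
  have e10 : Tm.1 1 0 = 0 := rfl
  have e11 : Tm.1 1 1 = 1 := rfl
  rw [e00, e01, e10, e11] at this
  simpa using this

lemma mf_bdd {f : ℂ → ℂ} {n : ℤ} (hf : IsModularForm (Gamma0R 2) (fun _ => 1) n f) :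
    BoundedAtFilter LInf f := by
  obtain ⟨C, hC⟩ := hf.bdd_at_cusps 1
  refine Asymptotics.IsBigO.of_bound C ?_
  have h2 : ∀ᶠ z in LInf, (1:ℝ) ≤ Complex.im z := tendsto_comap.eventually (eventually_ge_atTop 1)
  filter_upwards [uhp_ev, h2] with z hz h1
  have := hC z hz h1
  simpa [moeb, jfac] using this

lemma mf_W {f : ℂ → ℂ} {n : ℤ} {e : ℂ} (hf : f ∈ MFplus2 e n) {z : ℂ} (hz : z ∈ UHP) :
    f (-1 / (2 * z)) = e * ((Real.sqrt 2 : ℂ) * z) ^ n * f z := by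
  have h := hf.2 z hz
  have h0 : (Real.sqrt 2 : ℂ) * z ≠ 0 := mul_ne_zero (by simp) (uhp_ne hz)
  rw [_root_.zpow_neg, inv_mul_eq_iff_eq_mul₀ (zpow_ne_zero _ h0)] at h
  rw [h]; ring

lemma s2_sq (z : ℂ) : ((Real.sqrt 2 : ℂ) * z) ^ 2 = 2 * z ^ 2 := by
  rw [mul_pow, ← Complex.ofReal_pow, Real.sq_sqrt (by norm_num)]; norm_num

lemma s2_pow (z : ℂ) (k : ℕ) : ((Real.sqrt 2 : ℂ) * z) ^ (4 * k : ℤ) = (4 * z ^ 4) ^ k := by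
  rw [show (4 * k : ℤ) = ((2 * (2 * k) : ℕ) : ℤ) by push_cast; ring, zpow_natCast, pow_mul, s2_sq, pow_mul]
  ring

lemma vorder {f : ℂ → ℂ} {k : ℕ} (h : VOrder 1 f (k : ℝ)) :
    ∃ c : ℂ, c ≠ 0 ∧ Tendsto (fun z => cexp (-(2 * Real.pi * Complex.I * k * z)) * f z) LInf (𝓝 c) := by
  obtain ⟨c, hc, h⟩ := h
  refine ⟨c, hc, Metric.tendsto_nhds.2 fun ε hε => ?_⟩
  obtain ⟨Y, hY⟩ := h ε hε
  have h2 : ∀ᶠ z in LInf, Y ≤ Complex.im z := tendsto_comap.eventually (eventually_ge_atTop Y)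
  filter_upwards [h2] with z hz
  have := hY z hz
  rw [dist_eq_norm]
  simpa using this


/-- Theorem: an extremal quasimodular form of weight `4k` and depth 1
on `Γ₀⁺(2)` with sign `(-1)^k`, divided by `M₈^{k/2}`, solves
`y″ = -4π²(k/2)² M₄ y`. -/
theorem extremal_Gamma0plus2_weight4k_MODE
    (k : ℕ)
    (f₀ f₁ : ℂ → ℂ)
    (hf₀ : f₀ ∈ MFplus2 ((-1 : ℂ) ^ k) (4 * k))
    (hf₁ : f₁ ∈ MFplus2 ((-1 : ℂ) ^ k) (4 * k - 2))
    (f : ℂ → ℂ) (hf : ∀ z, f z = f₀ z + M2star2 z * f₁ z)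
    (hext : VOrder 1 f (k : ℝ)) :
    ∀ z ∈ UHP,
      deriv (deriv fun w => f w / Pfun2 k w) z
        = -(4 * (Real.pi : ℂ) ^ 2) * ((k : ℂ) / 2) ^ 2 * M4plus2 z * (f z / Pfun2 k z) := by
  obtain ⟨c, hc, hfc⟩ := vorder hext
  have he : ((-1 : ℂ) ^ k) ^ 2 = 1 := by rw [← pow_mul, mul_comm, pow_mul]; norm_num
  have he0 : ((-1 : ℂ) ^ k) ≠ 0 := by simp
  have heinv : ∀ x p : ℂ, x / ((-1) ^ k * p) = (-1) ^ k * (x / p) := by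
    intro x p
    rw [div_mul_eq_div_div, div_eq_mul_inv x, show ((-1 : ℂ) ^ k)⁻¹ = (-1) ^ k from
      inv_eq_of_mul_eq_one_left (by rw [← sq, he])]
    ring
  have hpi : (Real.pi : ℂ) ≠ 0 := by exact_mod_cast Real.pi_ne_zero
  obtain ⟨v0, hv0⟩ := tendsto_of_bdd hf₁.1.holo (fun z hz => mf_T hf₁.1 hz) (mf_bdd hf₁.1)
  have hfd : DifferentiableOn ℂ f UHP :=
    (hf₀.1.holo.add (M2_diff.mul hf₁.1.holo)).congr fun z _ => hf z
  have hP := Pfun2_inf k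
  have h1W : ∀ z ∈ UHP, f₁ (-1 / (2 * z)) = (-1) ^ k * ((4 * z ^ 4) ^ k / (2 * z ^ 2)) * f₁ z := by
    intro z hz
    have h0 : (Real.sqrt 2 : ℂ) * z ≠ 0 := mul_ne_zero (by simp) (uhp_ne hz)
    rw [mf_W hf₁ hz, zpow_sub₀ h0, s2_pow, zpow_ofNat, s2_sq]
  have h0W : ∀ z ∈ UHP, f₀ (-1 / (2 * z)) = (-1) ^ k * (4 * z ^ 4) ^ k * f₀ z := by
    intro z hz
    rw [mf_W hf₀ hz, s2_pow]
  intro z hz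
  have key := core (y := fun w => f w / Pfun2 k w) (g := fun w => f₁ w / Pfun2 k w) (M := M4plus2)
    (D := Pfun2 2) (β := 4 / (Real.pi * Complex.I)) (e := (-1) ^ k) (c := c) (v0 := v0) (k := k)
    he (by simp [hpi]) (hfd.div (Pfun2_diff k) fun z hz => Pfun2_ne k hz)
    (hf₁.1.holo.div (Pfun2_diff k) fun z hz => Pfun2_ne k hz)
    (fun z hz => by
      simp only [Pfun2_T, heinv]
      rw [hf, hf, M2_T, mf_T hf₀.1 hz, mf_T hf₁.1 hz])
    (fun z hz => by
      simp only [Pfun2_T, heinv]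
      rw [mf_T hf₁.1 hz])
    (fun z hz => by
      have h0 := uhp_ne hz
      have hp := Pfun2_ne k hz
      rw [Pfun2_W k hz, hf, hf, M2_W hz, h0W z hz, h1W z hz]
      have h4 : (4 * z ^ 4) ^ k ≠ 0 := pow_ne_zero _ (mul_ne_zero (by norm_num) (pow_ne_zero _ h0))
      generalize (4 * z ^ 4) ^ k = Q at *
      have hI := Complex.I_ne_zero
      field_simp
      try ring)
    (fun z hz => by
      have h0 := uhp_ne hz
      have hp := Pfun2_ne k hz
      rw [Pfun2_W k hz, h1W z hz]
      have h4 : (4 * z ^ 4) ^ k ≠ 0 := pow_ne_zero _ (mul_ne_zero (by norm_num) (pow_ne_zero _ h0))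
      generalize (4 * z ^ 4) ^ k = Q at *
      field_simp)
    hc
    (by
      have := hfc.div hP one_ne_zero
      rw [div_one] at this
      refine this.congr fun w => ?_
      rw [Pi.div_apply, show -(2 * Real.pi * Complex.I * k * w) =
        -(Real.pi * Complex.I * k * w) + -(Real.pi * Complex.I * k * w) by ring, Complex.exp_add,
        mul_assoc, mul_div_mul_left _ _ (Complex.exp_ne_zero _), mul_div_assoc])
    (by
      have := hv0.div hP one_ne_zero
      rw [div_one] at this
      refine this.congr fun w => ?_
      rw [Pi.div_apply, Complex.exp_neg]
      rw [div_mul_eq_div_div, div_inv_eq_mul]; ring)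
    M4_diff (Pfun2_diff 2) (fun z hz => Pfun2_ne 2 hz) (fun z _ => M4_T z)
    (fun z _ => by rw [Pfun2_T]; norm_num) (fun z hz => M4_W hz)
    (fun z hz => by rw [Pfun2_W 2 hz]; ring) M4_inf qexp_O z hz
  rw [key, mul_pow, mul_pow, Complex.I_sq]
  ring
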